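/- arXiv:1609.01782 — 2 statements merged into one kernel-verified Lean document; each statement's English description precedes it below -/
import Mathlib

section
/- For all n ≥ 1 and all integers m ≥ 0, the number of lattice points in the m-th dilate of P_n(132,312) is |m·P_n(132,312) ∩ ℤ^n| = Σ_{k=0}^{n−1} (n−1)↓_k · m^k, where (n−1)↓_k = (n−1)(n−2)⋯(n−k) denotes the falling factorial, with (n−1)↓_0 = 1. -/
open Pointwise

/-- `σ` contains the pattern `π`. -/
def containsPattern {n k : ℕ} (σ : Equiv.Perm (Fin n)) (π : Equiv.Perm (Fin k)) : Prop :=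
  ∃ f : Fin k → Fin n, StrictMono f ∧ ∀ a b : Fin k, σ (f a) < σ (f b) ↔ π a < π b

/-- The pattern 132. -/
def p132 : Equiv.Perm (Fin 3) := Equiv.swap 1 2
/-- The pattern 312. -/
def p312 : Equiv.Perm (Fin 3) := (finRotate 3)⁻¹

/-- The point `(σ(1), …, σ(n)) ∈ ℝ^n` (one-based values). -/
def permPoint {n : ℕ} (σ : Equiv.Perm (Fin n)) : Fin n → ℝ := fun i => ((σ i : ℕ) : ℝ) + 1

/-- The polytope `P_n(132,312)`. -/
def P132312 (n : ℕ) : Set (Fin n → ℝ) :=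
  convexHull ℝ (permPoint ''
    {σ : Equiv.Perm (Fin n) | ¬ containsPattern σ p132 ∧ ¬ containsPattern σ p312})

/-!
In a permutation avoiding 132 and 312 every entry is either larger or smaller than all preceding
ones, so the permutation is determined by the set of positions of its left-to-right minima, and
any set of positions occurs. The entry at `i` is `i`, minus `i` if `i` is a minimum, plus the number
of later minima: the points of these permutations are the images of the vertices of the unit cube
under an affine map. The polytope is therefore a parallelepiped, cut out of its hyperplane by
bounds `0 ≤ ∑_{j < k} (u_j - u_k) ≤ k (k + 1)` on the translated coordinates.

In the `m`-th dilate, the bound for the last of `n + 1` positions confines the last coordinate to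
`m n` consecutive integers, or to `m n + 1` of them when `n + 1` divides the coordinate sum `t`, and
what remains is a slice of the same kind with one coordinate less. Hence the number of lattice
points depends on `t` only through whether `n + 1` divides it, and satisfies the recursion of the
falling factorial sums.
-/

open Finset

section PrefixGap

variable {R : Type*} {n : ℕ}

/-- The total excess `∑_{j < k} (u_j - u_k)` of the entries before position `k` over the entry at
`k`. These are the facet functionals of `P_n(132,312)`. -/
def prefixGap [Ring R] (u : Fin n → R) (k : Fin n) : R :=
  ∑ j < k, (u j - u k)

/-- The vectors with coordinate sum `t` and prefix gaps bounded by `0 ≤ gap_k ≤ c k (k + 1)`. For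
`t = 0` this is the translate of the dilate `c • P_n(132,312)` taking the vertex of the identity
permutation to the origin; general `t` is needed to count by recursion on the last coordinate. -/
def gapSlice [Ring R] [Preorder R] (n : ℕ) (c t : R) : Set (Fin n → R) :=
  {u | ∑ i, u i = t ∧ ∀ k : Fin n, prefixGap u k ∈ Set.Icc 0 (c * (k * (k + 1)))}

lemma prefixGap_castSucc [Ring R] (u : Fin (n + 1) → R) (k : Fin n) :
    prefixGap u k.castSucc = prefixGap (Fin.init u) k :=
  Fin.sum_Iio_castSucc _ k

lemma prefixGap_last [Ring R] (u : Fin (n + 1) → R) :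
    prefixGap u (Fin.last n) = ∑ i, u i - (n + 1) * u (Fin.last n) := by
  rw [prefixGap, Fin.Iio_last_eq_map, sum_map, Fin.sum_univ_castSucc]
  simp only [Fin.coe_castSuccEmb, sum_sub_distrib, sum_const, card_univ, Fintype.card_fin,
    nsmul_eq_mul]
  noncomm_ring

lemma eq_of_prefixGap_eq [Ring R] [NoZeroDivisors R] [CharZero R] {u v : Fin n → R}
    (hsum : ∑ i, u i = ∑ i, v i) (hgap : ∀ k, prefixGap u k = prefixGap v k) : u = v := by
  induction n with
  | zero => exact Subsingleton.elim u v
  | succ n ih =>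
    have hlast : u (Fin.last n) = v (Fin.last n) := by
      have h := hgap (Fin.last n)
      rw [prefixGap_last, prefixGap_last, hsum, sub_right_inj] at h
      exact mul_left_cancel₀ n.cast_add_one_ne_zero h
    have hinit : Fin.init u = Fin.init v := by
      refine ih ?_ fun k => ?_
      · rw [Fin.sum_univ_castSucc, Fin.sum_univ_castSucc, hlast] at hsum
        exact add_right_cancel hsum
      · rw [← prefixGap_castSucc, ← prefixGap_castSucc, hgap]
    rw [← Fin.snoc_init_self u, ← Fin.snoc_init_self v, hinit, hlast]

lemma mem_gapSlice_succ [Ring R] [Preorder R] (c t : R) (u : Fin (n + 1) → R) :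
    u ∈ gapSlice (n + 1) c t ↔
      t - (n + 1) * u (Fin.last n) ∈ Set.Icc 0 (c * (n * (n + 1))) ∧
        Fin.init u ∈ gapSlice n c (t - u (Fin.last n)) := by
  have hsum : ∑ i, u i = t ↔ ∑ i, Fin.init u i = t - u (Fin.last n) := by
    rw [Fin.sum_univ_castSucc, ← eq_sub_iff_add_eq]
    rfl
  simp only [gapSlice, Set.mem_ofPred_eq, Fin.forall_fin_succ', prefixGap_castSucc, prefixGap_last,
    Fin.val_castSucc, Fin.val_last, hsum]
  grind

lemma intCast_mem_gapSlice (m t : ℤ) (u : Fin n → ℤ) :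
    (fun i => (u i : ℝ)) ∈ gapSlice n (m : ℝ) t ↔ u ∈ gapSlice n m t := by
  simp only [gapSlice, prefixGap, Set.mem_ofPred_eq, Set.mem_Icc]
  norm_cast

end PrefixGap

section EdgeMap

variable {n : ℕ}

/-- The linear map sending the `j`-th basis vector to `e_0 + ⋯ + e_{j-1} - j e_j`: the
displacement of the points of the permutations when the entry at position `j` changes from the
largest to the smallest among the first `j + 1`. -/
noncomputable def edgeMap (n : ℕ) : (Fin n → ℝ) →ₗ[ℝ] (Fin n → ℝ) :=
  LinearMap.pi fun i => ∑ j > i, LinearMap.proj j - (i : ℝ) • LinearMap.proj i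

lemma edgeMap_apply (d : Fin n → ℝ) (i : Fin n) :
    edgeMap n d i = ∑ j > i, d j - i * d i := by
  simp [edgeMap]

lemma sum_edgeMap (d : Fin n → ℝ) : ∑ i, edgeMap n d i = 0 := by
  have hswap : ∑ i : Fin n, ∑ j > i, d j = ∑ j : Fin n, ∑ _i < j, d j :=
    sum_comm' (by simp)
  simp [edgeMap_apply, sum_sub_distrib, hswap]

lemma prefixGap_edgeMap (d : Fin n → ℝ) (k : Fin n) :
    prefixGap (edgeMap n d) k = k * (k + 1) * d k := by
  have hterm : ∀ j ∈ Iio k, edgeMap n d j - edgeMap n d k =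
      ∑ i ∈ Ioc j k, d i - j * d j + k * d k := by
    intro j hj
    have hsplit : ∑ i > j, d i = ∑ i ∈ Ioc j k, d i + ∑ i > k, d i := by
      rw [← sum_union (disjoint_left.2 fun i => by simp +contextual)]
      congr 1
      grind
    rw [edgeMap_apply, edgeMap_apply, hsplit]
    ring
  have hswap : ∑ j < k, ∑ i ∈ Ioc j k, d i = ∑ j < k, j * d j + k * d k := by
    calc ∑ j < k, ∑ i ∈ Ioc j k, d i
        = ∑ i ≤ k, ∑ _j < i, d i := sum_comm' fun _ _ => by grind
      _ = ∑ i ≤ k, i * d i := by simp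
      _ = _ := by rw [← Iio_insert, sum_insert (by simp), add_comm]
  rw [prefixGap, sum_congr rfl hterm, sum_add_distrib, sum_sub_distrib, hswap]
  simp only [sum_const, Fin.card_Iio, nsmul_eq_mul]
  ring

theorem edgeMap_image_Icc {c : ℝ} (hc : 0 ≤ c) :
    edgeMap n '' Set.univ.pi (fun _ => Set.Icc 0 c) = gapSlice n c 0 := by
  ext u
  constructor
  · rintro ⟨d, hd, rfl⟩
    refine ⟨sum_edgeMap d, fun k => ?_⟩
    obtain ⟨h0, h1⟩ := hd k (Set.mem_univ k)
    rw [prefixGap_edgeMap, mul_comm c]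
    exact ⟨by positivity, by gcongr⟩
  · rintro ⟨hsum, hgap⟩
    refine ⟨fun k => prefixGap u k / (k * (k + 1)), fun k _ => ?_, ?_⟩
    · exact ⟨div_nonneg (hgap k).1 (by positivity),
        div_le_of_le_mul₀ (by positivity) hc (hgap k).2⟩
    · refine eq_of_prefixGap_eq ((sum_edgeMap _).trans hsum.symm) fun k => ?_
      rw [prefixGap_edgeMap]
      rcases eq_or_ne ((k : ℝ) * (k + 1)) 0 with hk | hk
      · have := hgap k
        rw [hk, mul_zero, Set.Icc_self, Set.mem_singleton_iff] at this
        rw [this, hk, zero_mul]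
      · exact mul_div_cancel₀ _ hk

end EdgeMap

section Vertices

variable {n : ℕ}

lemma containsPattern_p132_iff (σ : Equiv.Perm (Fin n)) :
    containsPattern σ p132 ↔ ∃ i j k, i < j ∧ j < k ∧ σ i < σ k ∧ σ k < σ j := by
  constructor
  · rintro ⟨f, hf, hσ⟩
    exact ⟨f 0, f 1, f 2, hf (by decide), hf (by decide), (hσ _ _).2 (by decide),
      (hσ _ _).2 (by decide)⟩
  · rintro ⟨i, j, k, hij, hjk, hik, hkj⟩
    have h0 : p132 0 = 0 := by decide
    have h1 : p132 1 = 2 := by decide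
    have h2 : p132 2 = 1 := by decide
    refine ⟨![i, j, k], by simp [Fin.strictMono_iff_lt_succ, Fin.forall_fin_two, hij, hjk], ?_⟩
    simp [Fin.forall_fin_succ, h0, h1, h2, hik, hkj, hik.trans hkj, hik.le, hkj.le,
      (hik.trans hkj).le]

lemma containsPattern_p312_iff (σ : Equiv.Perm (Fin n)) :
    containsPattern σ p312 ↔ ∃ i j k, i < j ∧ j < k ∧ σ j < σ k ∧ σ k < σ i := by
  constructor
  · rintro ⟨f, hf, hσ⟩
    exact ⟨f 0, f 1, f 2, hf (by decide), hf (by decide), (hσ _ _).2 (by decide),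
      (hσ _ _).2 (by decide)⟩
  · rintro ⟨i, j, k, hij, hjk, hσjk, hki⟩
    have h0 : p312 0 = 2 := by decide
    have h1 : p312 1 = 0 := by decide
    have h2 : p312 2 = 1 := by decide
    refine ⟨![i, j, k], by simp [Fin.strictMono_iff_lt_succ, Fin.forall_fin_two, hij, hjk], ?_⟩
    simp [Fin.forall_fin_succ, h0, h1, h2, hσjk, hki, hσjk.trans hki, hσjk.le, hki.le,
      (hσjk.trans hki).le]

lemma avoids_p132_p312_iff (σ : Equiv.Perm (Fin n)) :
    ¬ containsPattern σ p132 ∧ ¬ containsPattern σ p312 ↔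
      ∀ ⦃i j k : Fin n⦄, i < k → j < k → σ i < σ k → σ j < σ k := by
  rw [containsPattern_p132_iff, containsPattern_p312_iff]
  constructor
  · rintro ⟨h132, h312⟩ i j k hik hjk hσ
    by_contra hjk'
    have hkj : σ k < σ j := lt_of_le_of_ne (not_lt.1 hjk') (σ.injective.ne hjk.ne')
    rcases lt_trichotomy i j with hij | rfl | hji
    · exact h132 ⟨i, j, k, hij, hjk, hσ, hkj⟩
    · exact lt_asymm hσ hkj
    · exact h312 ⟨j, i, k, hji, hik, hσ, hkj⟩
  · intro h
    constructor
    · rintro ⟨i, j, k, hij, hjk, hik, hkj⟩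
      exact lt_asymm hkj (h (hij.trans hjk) hjk hik)
    · rintro ⟨i, j, k, hij, hjk, hσjk, hki⟩
      exact lt_asymm hki (h hjk (hij.trans hjk) hσjk)

lemma perm_eq_of_lt_iff_lt {α : Type*} [LinearOrder α] [WellFoundedLT α] {σ τ : Equiv.Perm α}
    (h : ∀ ⦃i k⦄, i < k → (σ i < σ k ↔ τ i < τ k)) : σ = τ := by
  have hle : ∀ i k, σ i ≤ σ k ↔ τ i ≤ τ k := by
    intro i k
    rcases lt_trichotomy i k with hik | rfl | hki
    · simp only [(σ.injective.ne hik.ne).le_iff_lt, (τ.injective.ne hik.ne).le_iff_lt, h hik]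
    · simp only [le_refl]
    · rw [← not_lt, ← not_lt, h hki]
  let e : α ≃o α := ⟨σ.symm.trans τ, fun {a b} => by simp [← hle]⟩
  ext i
  simpa [e] using (DFunLike.congr_fun (Subsingleton.elim e (OrderIso.refl α)) (σ i)).symm

/-- The number of entries of `lrMinPerm s` below the one at `i`: those at later positions in `s`,
and all earlier ones unless `i` is itself in `s`. -/
def lrMinValue (s : Finset (Fin n)) (i : Fin n) : ℕ :=
  #{j ∈ s | i < j} + if i ∈ s then 0 else (i : ℕ)

lemma lrMinValue_lt (s : Finset (Fin n)) (i : Fin n) : lrMinValue s i < n := by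
  have hcard : #{j ∈ s | i < j} ≤ #(Ioi i) := card_le_card fun j => by simp
  rw [Fin.card_Ioi] at hcard
  grind [lrMinValue]

lemma lrMinValue_lt_of_mem {s : Finset (Fin n)} {i k : Fin n} (hik : i < k) (hk : k ∈ s) :
    lrMinValue s k < lrMinValue s i := by
  have hcard : #{j ∈ s | k < j} < #{j ∈ s | i < j} :=
    card_lt_card <| (ssubset_iff_of_subset fun j => by grind).2 ⟨k, by simp [hik, hk]⟩
  grind [lrMinValue]

lemma lt_lrMinValue_of_notMem {s : Finset (Fin n)} {i k : Fin n} (hik : i < k) (hk : k ∉ s) :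
    lrMinValue s i < lrMinValue s k := by
  have hsub : {j ∈ s | i < j} ⊆ {j ∈ s | k < j} ∪ Ioo i k := fun j => by grind
  have hcard : #{j ∈ s | i < j} ≤ #{j ∈ s | k < j} + (k - i - 1) :=
    Fin.card_Ioo i k ▸ (card_le_card hsub).trans (card_union_le _ _)
  grind [lrMinValue]

lemma lrMinValue_injective (s : Finset (Fin n)) : Function.Injective (lrMinValue s) := by
  refine Function.Injective.of_lt_imp_ne fun i k hik => ?_
  by_cases hk : k ∈ s
  · exact (lrMinValue_lt_of_mem hik hk).ne'
  · exact (lt_lrMinValue_of_notMem hik hk).ne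

/-- The permutation whose left-to-right minima are the positions in `s` (the position `0` being one
in any case), every other entry being a left-to-right maximum. -/
noncomputable def lrMinPerm (s : Finset (Fin n)) : Equiv.Perm (Fin n) :=
  Equiv.ofBijective (fun i => ⟨lrMinValue s i, lrMinValue_lt s i⟩) <|
    Finite.injective_iff_bijective.1 fun _ _ h => lrMinValue_injective s (Fin.mk.inj h)

lemma lrMinPerm_val (s : Finset (Fin n)) (i : Fin n) : (lrMinPerm s i : ℕ) = lrMinValue s i :=
  rfl

lemma lrMinPerm_lt_iff {s : Finset (Fin n)} {i k : Fin n} (hik : i < k) :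
    lrMinPerm s i < lrMinPerm s k ↔ k ∉ s := by
  rw [Fin.lt_def, lrMinPerm_val, lrMinPerm_val]
  exact ⟨fun h hk => lt_asymm h (lrMinValue_lt_of_mem hik hk), lt_lrMinValue_of_notMem hik⟩

theorem setOf_avoids_p132_p312 :
    {σ : Equiv.Perm (Fin n) | ¬ containsPattern σ p132 ∧ ¬ containsPattern σ p312} =
      Set.range lrMinPerm := by
  ext σ
  rw [Set.mem_ofPred_eq, avoids_p132_p312_iff]
  constructor
  · intro h
    refine ⟨({k | ∃ i < k, σ k < σ i} : Finset (Fin n)), perm_eq_of_lt_iff_lt fun i k hik => ?_⟩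
    rw [lrMinPerm_lt_iff hik, mem_filter_univ]
    push Not
    constructor
    · exact fun hk => lt_of_le_of_ne (hk i hik) (σ.injective.ne hik.ne)
    · exact fun hσ j hj => (h hik hj hσ).le
  · rintro ⟨s, rfl⟩ i j k hik hjk hlt
    exact (lrMinPerm_lt_iff hjk).2 ((lrMinPerm_lt_iff hik).1 hlt)

end Vertices

section Polytope

variable {n : ℕ}

lemma permPoint_lrMinPerm (s : Finset (Fin n)) :
    permPoint (lrMinPerm s) =
      permPoint (Equiv.refl (Fin n)) + edgeMap n (fun i => if i ∈ s then 1 else 0) := by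
  funext i
  have hcount : ∑ j > i, (if j ∈ s then (1 : ℝ) else 0) = #{j ∈ s | i < j} := by
    rw [sum_boole]
    congr 2
    grind
  rw [Pi.add_apply, edgeMap_apply, hcount, permPoint, permPoint, lrMinPerm_val, lrMinValue]
  split_ifs <;> simp <;> ring

lemma univ_pi_pair_eq_range {ι M : Type*} [Finite ι] [DecidableEq ι] (a b : M) :
    (Set.univ.pi fun _ : ι => ({a, b} : Set M)) =
      Set.range fun (s : Finset ι) i => if i ∈ s then b else a := by
  classical
  have := Fintype.ofFinite ι
  ext d
  constructor
  · intro hd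
    refine ⟨({i | d i = b} : Finset ι), funext fun i => ?_⟩
    grind [hd i (Set.mem_univ i)]
  · rintro ⟨s, rfl⟩ i -
    grind

theorem P132312_eq (n : ℕ) :
    P132312 n = {permPoint (Equiv.refl (Fin n))} +
      edgeMap n '' Set.univ.pi fun _ => Set.Icc 0 1 := by
  have hvertices : permPoint '' Set.range (lrMinPerm (n := n)) =
      {permPoint (Equiv.refl (Fin n))} + edgeMap n '' Set.univ.pi fun _ => {0, 1} := by
    rw [univ_pi_pair_eq_range, ← Set.range_comp, ← Set.range_comp, Set.singleton_add,
      ← Set.range_comp]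
    exact congrArg Set.range (funext permPoint_lrMinPerm)
  rw [P132312, setOf_avoids_p132_p312, hvertices, convexHull_add, convexHull_singleton,
    ← LinearMap.image_convexHull, convexHull_pi]
  simp only [convexHull_pair, segment_eq_Icc zero_le_one]

theorem smul_P132312_eq {c : ℝ} (hc : 0 ≤ c) :
    c • P132312 n = {c • permPoint (Equiv.refl (Fin n))} + gapSlice n c 0 := by
  have hIcc : (c • fun _ : Fin n => Set.Icc (0 : ℝ) 1) = fun _ => Set.Icc 0 c := by
    funext i
    rw [Pi.smul_apply, ← segment_eq_Icc zero_le_one, ← convexHull_pair, ← convexHull_smul,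
      Set.smul_set_insert, Set.smul_set_singleton, smul_zero, smul_eq_mul, mul_one,
      convexHull_pair, segment_eq_Icc hc]
  rw [P132312_eq, smul_add, Set.smul_set_singleton, ← image_smul_set, smul_univ_pi, hIcc,
    edgeMap_image_Icc hc]

theorem setOf_intCast_mem_smul_P132312 (m : ℕ) :
    {x : Fin n → ℤ | (fun i => (x i : ℝ)) ∈ (m : ℝ) • P132312 n} =
      (· + fun i : Fin n => m * ((i : ℤ) + 1)) '' gapSlice n (m : ℤ) 0 := by
  have hshift (x : Fin n → ℤ) :
      (fun i => (x i : ℝ)) - (m : ℝ) • permPoint (Equiv.refl (Fin n)) =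
        fun i => ((x i - m * ((i : ℤ) + 1) : ℤ) : ℝ) := by
    funext i
    simp [permPoint]
  ext x
  rw [Set.mem_ofPred_eq, smul_P132312_eq m.cast_nonneg, Set.singleton_add, Set.image_add_left,
    Set.image_add_right, Set.mem_preimage, Set.mem_preimage, neg_add_eq_sub, hshift,
    ← sub_eq_add_neg, ← Int.cast_natCast m, ← Int.cast_zero, intCast_mem_gapSlice]
  rfl

end Polytope

section Counting

/-- The sum `∑_k n↓_k m^k`, where `n↓_k` is the falling factorial. -/
def descFactorialSum (m n : ℕ) : ℕ :=
  ∑ k ∈ range (n + 1), n.descFactorial k * m ^ k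

lemma descFactorialSum_succ (m n : ℕ) :
    descFactorialSum m (n + 1) = 1 + (n + 1) * m * descFactorialSum m n := by
  rw [descFactorialSum, sum_range_succ', descFactorialSum, mul_sum, add_comm]
  simp only [Nat.succ_descFactorial_succ, Nat.descFactorial_zero, pow_zero, mul_one]
  congr 1
  exact sum_congr rfl fun k _ => by ring

lemma descFactorialSum_eq_one_add (m n : ℕ) :
    descFactorialSum m n = 1 + n * m * descFactorialSum m (n - 1) := by
  cases n with
  | zero => simp [descFactorialSum]
  | succ n => simpa using descFactorialSum_succ m n

lemma descFactorialSum_mono (m : ℕ) : Monotone (descFactorialSum m) := fun a b hab =>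
  (sum_le_sum fun k _ => by gcongr).trans
    (sum_le_sum_of_subset (range_subset_range.2 (by lia)))

lemma card_Ioc_filter_dvd_sub {N : ℕ} (hN : 0 < N) (m : ℕ) (a t : ℤ) :
    #{y ∈ Ioc (a - m * N) a | (N : ℤ) ∣ t - y} = m := by
  have hN' : (N : ℚ) ≠ 0 := by positivity
  have hfloor : ((a - m * N : ℤ) - t : ℚ) / (N : ℤ) = (a - t) / (N : ℤ) - m := by
    push_cast
    rw [sub_right_comm, sub_div, mul_div_cancel_right₀ _ hN']
  have hcard := Int.Ioc_filter_modEq_card (a - m * N) a (r := N) (by positivity) t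
  rw [hfloor, Int.floor_sub_natCast, sub_sub_cancel, max_eq_left (by positivity)] at hcard
  simp only [← Int.modEq_iff_dvd]
  exact_mod_cast hcard

lemma sum_Ioc_ite_dvd_sub {N : ℕ} (hN : 0 < N) (m g h : ℕ) (a t : ℤ) :
    ∑ y ∈ Ioc (a - m * N) a, (if (N : ℤ) ∣ t - y then g + h else g) = m * (N * g + h) := by
  have hsplit (y : ℤ) : (if (N : ℤ) ∣ t - y then g + h else g) =
      g + if (N : ℤ) ∣ t - y then h else 0 := by
    split_ifs <;> rfl
  have hlen : (a - (a - m * N)).toNat = m * N := by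
    rw [sub_sub_cancel]
    exact_mod_cast Int.toNat_natCast (m * N)
  simp only [hsplit, sum_add_distrib, ← sum_filter, sum_const, Int.card_Ioc, hlen,
    card_Ioc_filter_dvd_sub hN, smul_eq_mul]
  ring

/-- The possible last coordinates of a lattice point of `gapSlice (n + 1) m t`. -/
noncomputable def lastCoords (m n : ℕ) (t : ℤ) : Finset ℤ :=
  if (n + 1 : ℤ) ∣ t then Icc (t / (n + 1) - m * n) (t / (n + 1))
  else Ioc (t / (n + 1) - m * n) (t / (n + 1))

lemma mem_lastCoords (m n : ℕ) (t y : ℤ) :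
    y ∈ lastCoords m n t ↔ t - (n + 1) * y ∈ Set.Icc (0 : ℤ) (m * (n * (n + 1))) := by
  have hpos : (0 : ℤ) < n + 1 := by positivity
  have hub : y ≤ t / (n + 1) ↔ 0 ≤ t - (n + 1) * y := by
    rw [Int.le_ediv_iff_mul_le hpos, sub_nonneg, mul_comm]
  have hlb : t - (n + 1) * y ≤ m * (n * (n + 1)) ↔ t ≤ (y + m * n) * (n + 1) := by
    constructor <;> intro h <;> linarith
  rw [Set.mem_Icc, ← hub, hlb, and_comm, lastCoords]
  split_ifs with hdvd
  · obtain ⟨q, rfl⟩ := hdvd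
    rw [mem_Icc, Int.mul_ediv_cancel_left _ hpos.ne', sub_le_iff_le_add,
      mul_comm (n + 1 : ℤ) q, mul_le_mul_iff_left₀ hpos]
  · rw [mem_Ioc, sub_lt_iff_lt_add, Int.ediv_lt_iff_lt_mul hpos, lt_iff_le_and_ne,
      and_iff_left fun h => hdvd ⟨y + m * n, h.trans (mul_comm _ _)⟩]

lemma encard_gapSlice_succ (m n : ℕ) (t : ℤ) :
    (gapSlice (n + 1) (m : ℤ) t).encard =
      ∑ y ∈ lastCoords m n t, (gapSlice n (m : ℤ) (t - y)).encard := by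
  have hunion : gapSlice (n + 1) (m : ℤ) t = ⋃ y ∈ (lastCoords m n t : Set ℤ),
      (fun u => Fin.snoc (α := fun _ => ℤ) u y) '' gapSlice n (m : ℤ) (t - y) := by
    ext u
    simp only [Set.mem_iUnion, mem_coe, mem_lastCoords, exists_prop, Set.mem_image]
    constructor
    · intro hu
      have h := (mem_gapSlice_succ _ _ _).1 hu
      exact ⟨u (Fin.last n), h.1, Fin.init u, h.2, Fin.snoc_init_self u⟩
    · rintro ⟨y, hy, u, hu, rfl⟩
      rw [mem_gapSlice_succ, Fin.snoc_last, Fin.init_snoc]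
      exact ⟨hy, hu⟩
  have hdisj : (lastCoords m n t : Set ℤ).PairwiseDisjoint fun y =>
      (fun u => Fin.snoc (α := fun _ => ℤ) u y) '' gapSlice n (m : ℤ) (t - y) := by
    intro y _ z _ hyz
    refine Set.disjoint_left.2 ?_
    rintro _ ⟨u, -, rfl⟩ ⟨v, -, huv⟩
    exact hyz (Fin.snoc_injective2 huv).2.symm
  rw [hunion, (finite_toSet _).encard_biUnion hdisj, finsum_mem_coe_finset]
  exact sum_congr rfl fun y _ => Function.Injective.encard_image
    (fun u v huv => (Fin.snoc_injective2 huv).1) _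

lemma sum_lastCoords_ite_dvd_sub (m n g h : ℕ) (t : ℤ) :
    ∑ y ∈ lastCoords m (n + 1) t, (if (n + 1 : ℤ) ∣ t - y then g + h else g) =
      m * ((n + 1) * g + h) + if (n + 2 : ℤ) ∣ t then g + h else 0 := by
  have hsum := sum_Ioc_ite_dvd_sub n.succ_pos m g h (t / (n + 2)) t
  push_cast at hsum
  have hcast : ((n + 1 : ℕ) : ℤ) + 1 = n + 2 := by push_cast; ring
  rw [lastCoords, hcast, Nat.cast_succ]
  split_ifs with hdvd
  · obtain ⟨q, rfl⟩ := hdvd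
    have hq : (n + 2 : ℤ) * q / (n + 2) = q := Int.mul_ediv_cancel_left _ (by positivity)
    have hleft : (n + 1 : ℤ) ∣ (n + 2) * q - (q - m * (n + 1)) := ⟨q + m, by ring⟩
    rw [hq] at hsum ⊢
    rw [← Ioc_insert_left (sub_le_self q (by positivity)), sum_insert (by simp), hsum,
      if_pos hleft, add_comm]
  · rw [hsum, add_zero]

-- For `n = 0` the truncated `n - 1` is harmless, as every `t` is divisible by `1`.
theorem encard_gapSlice (m n : ℕ) (t : ℤ) :
    (gapSlice (n + 1) (m : ℤ) t).encard =
      ((if (n + 1 : ℤ) ∣ t then descFactorialSum m n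
        else descFactorialSum m n - descFactorialSum m (n - 1) : ℕ) : ℕ∞) := by
  induction n generalizing t with
  | zero =>
    have hsingleton : gapSlice 1 (m : ℤ) t = {fun _ => t} := by
      ext u
      simp [gapSlice, prefixGap, funext_iff, Subsingleton.elim _ (0 : Fin 1)]
    simp [hsingleton, descFactorialSum]
  | succ n ih =>
    set h := descFactorialSum m (n - 1)
    obtain ⟨g, hg⟩ : ∃ g, descFactorialSum m n = g + h :=
      Nat.exists_eq_add_of_le' (descFactorialSum_mono m (n.sub_le 1))
    have hrec : g + h = 1 + n * m * h := hg ▸ descFactorialSum_eq_one_add m n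
    have hsucc : descFactorialSum m (n + 1) = m * ((n + 1) * g + h) + (g + h) := by
      rw [descFactorialSum_succ, hg]
      linear_combination hrec.symm
    have hcast : ((n + 1 : ℕ) : ℤ) + 1 = n + 2 := by push_cast; ring
    simp only [encard_gapSlice_succ, ih, ← Nat.cast_sum, hg, Nat.add_sub_cancel_right,
      sum_lastCoords_ite_dvd_sub, hcast, hsucc]
    congr 1
    split_ifs
    · rfl
    · exact add_zero _

end Counting

theorem stmt3 (n : ℕ) (hn : 1 ≤ n) (m : ℕ) :
    Set.ncard {x : Fin n → ℤ | (fun i => (x i : ℝ)) ∈ (m : ℝ) • P132312 n} =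
      ∑ k ∈ Finset.range n, Nat.descFactorial (n - 1) k * m ^ k := by
  obtain ⟨n, rfl⟩ := Nat.exists_eq_add_of_le' hn
  have hcount := encard_gapSlice m n 0
  rw [if_pos (dvd_zero _)] at hcount
  rw [setOf_intCast_mem_smul_P132312, Set.ncard_image_of_injective _ (add_left_injective _),
    Set.ncard, hcount]
  rfl
end

section
/- For all n ≥ 2 and all integers m ≥ 0, (n−1)! · |m·P_n(123,132) ∩ ℤ^n| = (m+1) · ∏_{j=2}^{n−1} (n·m + j); i.e., the number of lattice points in the m-th dilate of P_n(123,132) equals (m+1)·∏_{j=2}^{n−1}(nm+j)/(n−1)!. -/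
open Pointwise

/-- The pattern 123. -/
def p123 : Equiv.Perm (Fin 3) := 1
/-- The polytope `P_n(123,132)`. -/
def P123132 (n : ℕ) : Set (Fin n → ℝ) :=
  convexHull ℝ (permPoint ''
    {σ : Equiv.Perm (Fin n) | ¬ containsPattern σ p123 ∧ ¬ containsPattern σ p132})

/-!
A permutation `σ` of `{1, …, n}` avoids 123 and 132 iff no entry has two larger entries to its
right, that is, iff `σ(i) ≥ n - i` for all `i`. For `n = k + 1`, subtracting these lower bounds and
forgetting the last coordinate, which is determined by the sum, sends `P_n(123,132)` into the
Pitman–Stanley polytope `{y ≥ 0 : y₁ + ⋯ + yᵢ ≤ i for i ≤ k}`, because the first `i` values of a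
permutation sum to at most `n + ⋯ + (n - i + 1)`.

This is onto, by induction on `k`: raising all values by one and appending the value 1 preserves the
class, and so does exchanging the last two entries afterwards. A lifted point is thus a convex
combination of two points obtained from the lift of its truncation.

So `m • P_{k+1}(123,132)` has as many lattice points as the Pitman–Stanley polytope with parameters
`(a, b, …, b)`, where `a = b = m`. The points with first coordinate 0 are those of parameters
`(a + b, b, …, b)` in one dimension less, and decreasing a positive first coordinate leads to
`(a - 1, b, …, b)`; the product formula satisfies this recursion.
-/

section PatternAvoidance

variable {n : ℕ} (σ : Equiv.Perm (Fin n))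

theorem avoids_p123_p132_iff_forall_lt :
    (¬ containsPattern σ p123 ∧ ¬ containsPattern σ p132) ↔
      ∀ i j k, i < j → j < k → σ i < σ j → ¬ σ i < σ k := by
  constructor
  · rintro ⟨h123, h132⟩ i j k hij hjk hσij hσik
    have hmono : StrictMono ![i, j, k] := by simp [hij, hjk]
    rcases lt_trichotomy (σ j) (σ k) with h | h | h
    · refine h123 ⟨![i, j, k], hmono, fun a b => ?_⟩
      fin_cases a <;> fin_cases b <;> simp [p123, h, hσij, hσik, h.le, hσij.le, hσik.le]
    · exact hjk.ne (σ.injective h)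
    · refine h132 ⟨![i, j, k], hmono, fun a b => ?_⟩
      have hp : p132 0 = 0 ∧ p132 1 = 2 ∧ p132 2 = 1 := by decide
      fin_cases a <;> fin_cases b <;> simp [hp, h, hσij, hσik, h.le, hσij.le, hσik.le]
  · intro h
    constructor <;> rintro ⟨f, hf, hfσ⟩ <;>
      exact h (f 0) (f 1) (f 2) (hf (by decide)) (hf (by decide))
        ((hfσ 0 1).2 (by decide)) ((hfσ 0 2).2 (by decide))

theorem le_apply_add_of_avoids (h : ∀ i j k, i < j → j < k → σ i < σ j → ¬ σ i < σ k) (i : Fin n) :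
    n ≤ σ i + i + 2 := by
  have hright : (Finset.filter (fun j => σ i < σ j) (Finset.Ioi i)).card ≤ 1 := by
    refine Finset.card_le_one.2 fun j hj k hk => ?_
    simp only [Finset.mem_filter, Finset.mem_Ioi] at hj hk
    rcases lt_trichotomy j k with hjk | hjk | hjk
    · exact (h i j k hj.1 hjk hj.2 hk.2).elim
    · exact hjk
    · exact (h i k j hk.1 hjk hk.2 hj.2).elim
  have hcover : (Finset.Ioi (σ i)).map σ.symm.toEmbedding ⊆
      Finset.Iio i ∪ Finset.filter (fun j => σ i < σ j) (Finset.Ioi i) := by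
    intro j hj
    have hj : σ i < σ j := by simpa [Finset.mem_map_equiv] using hj
    have hne : j ≠ i := by rintro rfl; exact hj.false
    simpa [hj] using hne.lt_or_gt
  have hcard := (Finset.card_le_card hcover).trans (Finset.card_union_le _ _)
  rw [Finset.card_map, Fin.card_Ioi, Fin.card_Iio] at hcard
  omega

theorem not_lt_of_forall_le_apply_add (h : ∀ i, n ≤ σ i + i + 2) {i j k : Fin n} (hij : i < j)
    (hjk : j < k) (hσij : σ i < σ j) : ¬ σ i < σ k := by
  intro hσik
  have hmem : ∀ l ∈ insert j (insert k (Finset.Iio i)), σ l ∈ Finset.Ici ⟨n - 1 - i, by omega⟩ := by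
    simp only [Finset.forall_mem_insert, Finset.mem_Iio, Finset.mem_Ici, Fin.le_def]
    refine ⟨?_, ?_, fun l hl => ?_⟩
    · have := h i
      omega
    · have := h i
      omega
    · have := h l
      omega
  have hcard := Finset.card_le_card_of_injOn σ hmem σ.injective.injOn
  rw [Finset.card_insert_of_notMem (by simp [hjk.ne, hij.le]),
    Finset.card_insert_of_notMem (by simp [(hij.trans hjk).le]), Fin.card_Iio,
    Fin.card_Ici] at hcard
  dsimp only at hcard
  omega

theorem avoids_p123_p132_iff_forall_le :
    (¬ containsPattern σ p123 ∧ ¬ containsPattern σ p132) ↔ ∀ i, n ≤ σ i + i + 2 :=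
  (avoids_p123_p132_iff_forall_lt σ).trans
    ⟨le_apply_add_of_avoids σ, fun h _ _ _ => not_lt_of_forall_le_apply_add σ h⟩

end PatternAvoidance

section PitmanStanley

variable {R : Type*} {k : ℕ}

/-- The Pitman–Stanley polytope with parameters `(a, b, …, b)`, over an arbitrary ordered ring `R`:
over `ℝ` it is the polytope itself, over `ℤ` the set of its lattice points. -/
def pitmanStanley [Semiring R] [PartialOrder R] (k : ℕ) (a b : R) : Set (Fin k → R) :=
  {y | (∀ i, 0 ≤ y i) ∧ ∀ i, ∑ j ≤ i, y j ≤ a + (i : ℕ) * b}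

section Semiring

variable [Semiring R] [PartialOrder R] {a b : R}

theorem init_mem_pitmanStanley {y : Fin (k + 1) → R} (hy : y ∈ pitmanStanley (k + 1) a b) :
    Fin.init y ∈ pitmanStanley k a b :=
  ⟨fun i => hy.1 i.castSucc, fun i => by
    simpa [Fin.sum_Iic_castSucc, Fin.init_def] using hy.2 i.castSucc⟩

theorem sum_le_of_mem_pitmanStanley {y : Fin (k + 1) → R} (hy : y ∈ pitmanStanley (k + 1) a b) :
    ∑ i, y i ≤ a + k * b := by
  simpa [← Fin.top_eq_last] using hy.2 (Fin.last k)

variable [IsOrderedRing R]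

theorem zero_mem_pitmanStanley (ha : 0 ≤ a) (hb : 0 ≤ b) : 0 ∈ pitmanStanley k a b :=
  ⟨fun _ => le_rfl, fun i => by
    simpa using add_nonneg ha (mul_nonneg (Nat.cast_nonneg (i : ℕ)) hb)⟩

theorem pitmanStanley_zero_zero : pitmanStanley k (0 : R) 0 = {0} := by
  refine Set.Subset.antisymm (fun y hy => funext fun i => le_antisymm ?_ (hy.1 i)) <|
    Set.singleton_subset_iff.2 (zero_mem_pitmanStanley le_rfl le_rfl)
  calc y i ≤ ∑ j ≤ i, y j :=
        Finset.single_le_sum (fun j _ => hy.1 j) (Finset.mem_Iic.2 le_rfl)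
    _ ≤ 0 := by simpa using hy.2 i

theorem add_mem_pitmanStanley {a' b' : R} {y z : Fin k → R} (hy : y ∈ pitmanStanley k a b)
    (hz : z ∈ pitmanStanley k a' b') : y + z ∈ pitmanStanley k (a + a') (b + b') := by
  refine ⟨fun i => add_nonneg (hy.1 i) (hz.1 i), fun i => ?_⟩
  calc ∑ j ≤ i, (y + z) j = ∑ j ≤ i, y j + ∑ j ≤ i, z j := Finset.sum_add_distrib
    _ ≤ (a + (i : ℕ) * b) + (a' + (i : ℕ) * b') := add_le_add (hy.2 i) (hz.2 i)
    _ = a + a' + (i : ℕ) * (b + b') := by rw [mul_add, add_add_add_comm]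

theorem smul_mem_pitmanStanley {c : R} (hc : 0 ≤ c) {y : Fin k → R}
    (hy : y ∈ pitmanStanley k a b) : c • y ∈ pitmanStanley k (c * a) (c * b) := by
  refine ⟨fun i => mul_nonneg hc (hy.1 i), fun i => ?_⟩
  calc ∑ j ≤ i, (c • y) j = c * ∑ j ≤ i, y j := (Finset.mul_sum _ _ _).symm
    _ ≤ c * (a + (i : ℕ) * b) := mul_le_mul_of_nonneg_left (hy.2 i) hc
    _ = c * a + (i : ℕ) * (c * b) := by rw [mul_add, ← mul_assoc, ← mul_assoc, Nat.cast_comm]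

end Semiring

theorem smul_pitmanStanley {𝕜 : Type*} [DivisionRing 𝕜] [LinearOrder 𝕜] [IsStrictOrderedRing 𝕜]
    {a b c : 𝕜} (hc : 0 ≤ c) (ha : 0 ≤ a) (hb : 0 ≤ b) :
    c • pitmanStanley k a b = pitmanStanley k (c * a) (c * b) := by
  rcases hc.eq_or_lt with rfl | hc
  · rw [Set.zero_smul_set ⟨0, zero_mem_pitmanStanley ha hb⟩, zero_mul, zero_mul,
      pitmanStanley_zero_zero, Set.singleton_zero]
  · refine Set.Subset.antisymm ?_ fun y hy => ?_
    · rintro _ ⟨y, hy, rfl⟩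
      exact smul_mem_pitmanStanley hc.le hy
    · rw [Set.mem_smul_set_iff_inv_smul_mem₀ hc.ne']
      simpa [hc.ne'] using smul_mem_pitmanStanley (inv_nonneg.2 hc.le) hy

section Ring

variable [Ring R] [PartialOrder R] [IsOrderedRing R]

theorem cons_mem_pitmanStanley_iff {a b v : R} {y : Fin k → R} :
    (Fin.cons v y : Fin (k + 1) → R) ∈ pitmanStanley (k + 1) a b ↔
      0 ≤ v ∧ v ≤ a ∧ y ∈ pitmanStanley k (a - v + b) b := by
  have hsum (i : Fin k) :
      ∑ j ≤ i.succ, (Fin.cons v y : Fin (k + 1) → R) j = v + ∑ j ≤ i, y j := by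
    rw [← Finset.Icc_bot, bot_eq_zero, Finset.Icc_eq_cons_Ioc (Fin.zero_le _), Finset.sum_cons,
      ← Fin.map_succEmb_Iic, Finset.sum_map]
    rfl
  have hbound (i : Fin k) : v + ∑ j ≤ i, y j ≤ a + ((i : ℕ) + 1) * b ↔
      ∑ j ≤ i, y j ≤ a - v + b + (i : ℕ) * b := by
    rw [← le_sub_iff_add_le', add_one_mul]
    abel_nf
  have hzero : ∑ j ≤ (0 : Fin (k + 1)), (Fin.cons v y : Fin (k + 1) → R) j = v := by
    rw [← bot_eq_zero, Finset.Iic_bot, Finset.sum_singleton, bot_eq_zero, Fin.cons_zero]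
  simp only [pitmanStanley, Set.mem_ofPred_eq, Fin.forall_fin_succ, hsum, hzero, Fin.cons_zero,
    Fin.cons_succ, Fin.val_zero, Fin.val_succ, Nat.cast_zero, Nat.cast_succ, zero_mul, add_zero,
    hbound]
  tauto

theorem intCast_mem_pitmanStanley_iff [Nontrivial R] {a b : ℤ} {y : Fin k → ℤ} :
    (fun i => (y i : R)) ∈ pitmanStanley k (a : R) b ↔ y ∈ pitmanStanley k a b := by
  simp only [pitmanStanley, Set.mem_ofPred_eq]
  norm_cast

end Ring

end PitmanStanley

section Counting

variable {k : ℕ} {a b : ℤ}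

theorem pitmanStanley_succ_eq_empty (ha : a < 0) : pitmanStanley (k + 1) a b = ∅ := by
  refine Set.eq_empty_of_forall_notMem fun y hy => ?_
  rw [← Fin.cons_self_tail y, cons_mem_pitmanStanley_iff] at hy
  exact (hy.1.trans hy.2.1).not_gt ha

theorem pitmanStanley_succ_eq_union (ha : 0 ≤ a) :
    pitmanStanley (k + 1) a b = Fin.cons 0 '' pitmanStanley k (a + b) b ∪
      (fun y => Fin.cons (y 0 + 1) (Fin.tail y)) '' pitmanStanley (k + 1) (a - 1) b := by
  ext y
  constructor
  · intro hy
    rw [← Fin.cons_self_tail y, cons_mem_pitmanStanley_iff] at hy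
    obtain ⟨h0, hle, htail⟩ := hy
    rcases h0.eq_or_lt with h | h
    · exact .inl ⟨Fin.tail y, by simpa [← h] using htail, by rw [h, Fin.cons_self_tail]⟩
    · refine .inr ⟨Fin.cons (y 0 - 1) (Fin.tail y), ?_, by simp⟩
      rw [cons_mem_pitmanStanley_iff, sub_sub_sub_cancel_right]
      exact ⟨by lia, by lia, htail⟩
  · rintro (⟨y, hy, rfl⟩ | ⟨y, hy, rfl⟩)
    · rw [cons_mem_pitmanStanley_iff, sub_zero]
      exact ⟨le_rfl, ha, hy⟩
    · rw [← Fin.cons_self_tail y, cons_mem_pitmanStanley_iff, sub_sub, add_comm 1] at hy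
      rw [cons_mem_pitmanStanley_iff]
      exact ⟨by lia, by lia, hy.2.2⟩

theorem finite_pitmanStanley (k : ℕ) (a b : ℤ) : (pitmanStanley k a b).Finite := by
  refine (Set.finite_Icc 0 fun i : Fin k => a + (i : ℕ) * b).subset fun y hy => ⟨hy.1, fun i => ?_⟩
  exact (Finset.single_le_sum (fun j _ => hy.1 j) (Finset.mem_Iic.2 le_rfl)).trans (hy.2 i)

theorem ncard_pitmanStanley_succ (ha : 0 ≤ a) :
    (pitmanStanley (k + 1) a b).ncard =
      (pitmanStanley k (a + b) b).ncard + (pitmanStanley (k + 1) (a - 1) b).ncard := by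
  have hshift : Function.Injective
      fun y : Fin (k + 1) → ℤ => (Fin.cons (y 0 + 1) (Fin.tail y) : Fin (k + 1) → ℤ) := by
    intro y z h
    obtain ⟨h0, htail⟩ := Fin.cons_inj.1 h
    rw [← Fin.cons_self_tail y, ← Fin.cons_self_tail z, htail, add_right_cancel h0]
  rw [pitmanStanley_succ_eq_union ha, Set.ncard_union_eq ?_ ((finite_pitmanStanley _ _ _).image _)
    ((finite_pitmanStanley _ _ _).image _), Set.ncard_image_of_injective _ hshift,
    Set.ncard_image_of_injective _ (Fin.cons_right_injective _)]
  rw [Set.disjoint_left]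
  rintro _ ⟨y, -, rfl⟩ ⟨z, hz, h⟩
  have h0 : z 0 + 1 = 0 := (Fin.cons_inj.1 h).1
  have := hz.1 0
  lia

theorem ncard_pitmanStanley_zero (a b : ℤ) : (pitmanStanley 0 a b).ncard = 1 := by
  simp [pitmanStanley, Set.ncard_univ]

theorem ncard_pitmanStanley_succ_zero (k : ℕ) (b : ℤ) :
    (pitmanStanley (k + 1) 0 b).ncard = (pitmanStanley k b b).ncard := by
  simp [ncard_pitmanStanley_succ, pitmanStanley_succ_eq_empty]

theorem ncard_pitmanStanley_succ_succ (k a b : ℕ) :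
    (pitmanStanley (k + 1) ((a + 1 : ℕ) : ℤ) b).ncard =
      (pitmanStanley k ((a + b + 1 : ℕ) : ℤ) b).ncard +
        (pitmanStanley (k + 1) (a : ℤ) b).ncard := by
  rw [ncard_pitmanStanley_succ (Nat.cast_nonneg _)]
  congr 3 <;> push_cast <;> ring

theorem succ_mul_ascFactorial_succ (k a b : ℕ) :
    (a + 2) * (a + (k + 2) * b + 3).ascFactorial (k + 1) =
      (k + 2) * ((a + b + 2) * (a + (k + 2) * b + 3).ascFactorial k) +
        (a + 1) * (a + (k + 2) * b + 2).ascFactorial (k + 1) := by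
  have hleft : (a + (k + 2) * b + 2).ascFactorial (k + 1) =
      (a + (k + 2) * b + 2) * (a + (k + 2) * b + 3).ascFactorial k :=
    Nat.ascFactorial_succ.trans (Nat.succ_ascFactorial _ k).symm
  rw [hleft, Nat.ascFactorial_succ]
  ring

theorem factorial_mul_ncard_pitmanStanley (k a b : ℕ) :
    (k + 1).factorial * (pitmanStanley (k + 1) (a : ℤ) b).ncard =
      (a + 1) * (a + (k + 1) * b + 2).ascFactorial k := by
  induction k generalizing a with
  | zero =>
    induction a with
    | zero => simp [ncard_pitmanStanley_succ_zero, ncard_pitmanStanley_zero]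
    | succ a iha =>
      rw [ncard_pitmanStanley_succ_succ, mul_add, iha, ncard_pitmanStanley_zero]
      simp [add_comm]
  | succ k ih =>
    induction a with
    | zero =>
      rw [Nat.cast_zero, ncard_pitmanStanley_succ_zero, Nat.factorial_succ, mul_assoc, ih,
        Nat.ascFactorial_succ]
      ring_nf
    | succ a iha =>
      have hih : a + b + 1 + (k + 1) * b + 2 = a + (k + 2) * b + 3 := by ring
      have hgoal : a + 1 + (k + 1 + 1) * b + 2 = a + (k + 2) * b + 3 := by ring
      rw [ncard_pitmanStanley_succ_succ, mul_add, iha, Nat.factorial_succ (k + 1), mul_assoc, ih,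
        hih, hgoal]
      exact (succ_mul_ascFactorial_succ k a b).symm

end Counting

section PermLift

variable {R : Type*} [Ring R] {k : ℕ}

/-- The affine embedding
`y ↦ (m * k + y 0, m * (k - 1) + y 1, …, m + y (k - 1), m * (k + 1) - ∑ i, y i)`. All the vectors in
its image have the coordinate sum of `m • (1, …, k + 1)`, and it identifies `pitmanStanley k m m`
over `ℝ` with `m • P123132 (k + 1)` for `m ≥ 0`. -/
def permLift (m : R) (y : Fin k → R) : Fin (k + 1) → R :=
  Fin.snoc (α := fun _ => R) (fun i => m * (k - (i : ℕ)) + y i) (m * (k + 1) - ∑ i, y i)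

@[simp]
theorem permLift_castSucc (m : R) (y : Fin k → R) (i : Fin k) :
    permLift m y i.castSucc = m * (k - (i : ℕ)) + y i :=
  Fin.snoc_castSucc ..

@[simp]
theorem permLift_last (m : R) (y : Fin k → R) :
    permLift m y (Fin.last k) = m * (k + 1) - ∑ i, y i :=
  Fin.snoc_last ..

theorem permLift_injective (m : R) : Function.Injective (permLift m : (Fin k → R) → _) := by
  intro y z h
  ext i
  simpa using congrFun h i.castSucc

theorem permLift_add (m m' : R) (y z : Fin k → R) :
    permLift (m + m') (y + z) = permLift m y + permLift m' z := by
  ext i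
  refine Fin.lastCases ?_ (fun i => ?_) i
  · simp [Finset.sum_add_distrib, add_mul, add_sub_add_comm]
  · simp [add_mul, add_add_add_comm]

theorem permLift_smul (c m : R) (y : Fin k → R) : permLift (c * m) (c • y) = c • permLift m y := by
  ext i
  refine Fin.lastCases ?_ (fun i => ?_) i
  · simp [← Finset.mul_sum, mul_sub, mul_assoc]
  · simp [mul_add, mul_assoc]

theorem smul_image_permLift (c m : R) (s : Set (Fin k → R)) :
    c • (permLift m '' s) = permLift (c * m) '' (c • s) := by
  simp only [← Set.image_smul, Set.image_image, permLift_smul]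

theorem convex_image_permLift [PartialOrder R] [IsOrderedRing R] (m a b : R) :
    Convex R (permLift m '' pitmanStanley k a b) := by
  rintro _ ⟨y, hy, rfl⟩ _ ⟨z, hz, rfl⟩ s t hs ht hst
  refine ⟨s • y + t • z, ?_, ?_⟩
  · have h := add_mem_pitmanStanley (smul_mem_pitmanStanley hs hy) (smul_mem_pitmanStanley ht hz)
    rwa [← add_mul, ← add_mul, hst, one_mul, one_mul] at h
  · rw [← permLift_smul, ← permLift_smul, ← permLift_add, ← add_mul, hst, one_mul]

theorem intCast_permLift (m : ℤ) (y : Fin k → ℤ) (i : Fin (k + 1)) :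
    ((permLift m y i : ℤ) : R) = permLift (m : R) (fun i => (y i : R)) i := by
  refine Fin.lastCases ?_ (fun i => ?_) i <;> simp

theorem setOf_intCast_mem_image_permLift [PartialOrder R] [IsStrictOrderedRing R]
    (m a b : ℤ) :
    {x : Fin (k + 1) → ℤ | (fun i => (x i : R)) ∈ permLift (m : R) '' pitmanStanley k (a : R) b} =
      permLift m '' pitmanStanley k a b := by
  ext x
  constructor
  · rintro ⟨z, hz, hzx⟩
    have hz_int : z = fun i : Fin k => ((x i.castSucc - m * (k - (i : ℕ)) : ℤ) : R) := by
      ext i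
      simpa [eq_sub_iff_add_eq'] using congrFun hzx i.castSucc
    subst hz_int
    refine ⟨_, intCast_mem_pitmanStanley_iff.1 hz, ?_⟩
    ext i
    exact Int.cast_injective (α := R) ((intCast_permLift m _ i).trans (congrFun hzx i))
  · rintro ⟨y, hy, rfl⟩
    exact ⟨fun i => (y i : R), intCast_mem_pitmanStanley_iff.2 hy,
      funext fun i => (intCast_permLift m y i).symm⟩

end PermLift

section Vertices

variable {n k : ℕ}

theorem P123132_eq_convexHull (n : ℕ) :
    P123132 n = convexHull ℝ (permPoint '' {σ : Equiv.Perm (Fin n) | ∀ i, n ≤ σ i + i + 2}) := by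
  simp only [P123132, avoids_p123_p132_iff_forall_le]

theorem sum_permPoint (σ : Equiv.Perm (Fin n)) :
    ∑ i, permPoint σ i = ∑ i : Fin n, ((n : ℝ) - (i : ℕ)) := by
  calc ∑ i, permPoint σ i = ∑ i : Fin n, (((i : ℕ) : ℝ) + 1) :=
        Equiv.sum_comp σ fun i => ((i : ℕ) : ℝ) + 1
    _ = ∑ i : Fin n, (((Fin.revPerm i : ℕ) : ℝ) + 1) :=
        (Equiv.sum_comp Fin.revPerm fun i : Fin n => ((i : ℕ) : ℝ) + 1).symm
    _ = ∑ i : Fin n, ((n : ℝ) - (i : ℕ)) := by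
        refine Finset.sum_congr rfl fun i _ => ?_
        rw [Fin.revPerm_apply, Fin.val_rev, Nat.cast_sub i.isLt]
        push_cast
        ring

theorem sum_Iic_permPoint_le (σ : Equiv.Perm (Fin n)) (i : Fin n) :
    ∑ j ≤ i, permPoint σ j ≤ ∑ j ≤ i, ((n : ℝ) - (j : ℕ)) := by
  have hinj : Set.InjOn (fun j => ((σ j : ℕ) : ℤ) + 1) (Finset.Iic i) := fun j _ l _ h =>
    σ.injective (Fin.ext (by simpa using h))
  have hbound : ∀ x ∈ (Finset.Iic i).image fun j => ((σ j : ℕ) : ℤ) + 1, x ≤ n :=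
    Finset.forall_mem_image.2 fun j _ => by exact_mod_cast (σ j).isLt
  have hle := Finset.sum_le_sum_range hbound
  rw [Finset.sum_image hinj, Finset.card_image_of_injOn hinj, Fin.card_Iic,
    Nat.range_succ_eq_Iic, ← Fin.map_valEmbedding_Iic, Finset.sum_map] at hle
  simp only [permPoint]
  exact_mod_cast hle

theorem permPoint_mem_image_permLift {σ : Equiv.Perm (Fin (k + 1))}
    (hσ : ∀ i, k + 1 ≤ σ i + i + 2) : permPoint σ ∈ permLift 1 '' pitmanStanley k (1 : ℝ) 1 := by
  refine ⟨fun i => permPoint σ i.castSucc - (k - (i : ℕ)), ⟨fun i => ?_, fun i => ?_⟩, ?_⟩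
  · have : ((k + 1 : ℕ) : ℝ) ≤ (σ i.castSucc + i + 2 : ℕ) := by exact_mod_cast hσ i.castSucc
    push_cast at this
    simp only [permPoint]
    linarith
  · have hle := sum_Iic_permPoint_le σ i.castSucc
    simp only [Fin.sum_Iic_castSucc, Fin.val_castSucc, Nat.cast_succ] at hle
    calc ∑ j ≤ i, (permPoint σ j.castSucc - (k - (j : ℕ)))
        = ∑ j ≤ i, permPoint σ j.castSucc - ∑ j ≤ i, ((k : ℝ) - (j : ℕ)) :=
          Finset.sum_sub_distrib ..
      _ ≤ ∑ j ≤ i, ((k : ℝ) + 1 - (j : ℕ)) - ∑ j ≤ i, ((k : ℝ) - (j : ℕ)) :=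
          sub_le_sub_right hle _
      _ = 1 + (i : ℕ) * 1 := by
          rw [← Finset.sum_sub_distrib]
          simp [add_sub_right_comm, add_comm]
  · have hsum := sum_permPoint σ
    rw [Fin.sum_univ_castSucc, Fin.sum_univ_castSucc] at hsum
    simp only [Fin.val_castSucc, Fin.val_last, Nat.cast_succ, add_sub_right_comm,
      Finset.sum_add_distrib, Fin.sum_const, nsmul_eq_mul, mul_one] at hsum
    ext i
    refine Fin.lastCases ?_ (fun i => by simp) i
    rw [permLift_last, Finset.sum_sub_distrib]
    linarith

/-- The permutation of `Fin (n + 1)` with one-line notation `σ(1) + 1, …, σ(n) + 1, 1`. -/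
def snocMin (σ : Equiv.Perm (Fin n)) : Equiv.Perm (Fin (n + 1)) :=
  (finRotate (n + 1)).trans (Equiv.Perm.decomposeFin.symm (0, σ))

@[simp]
theorem snocMin_castSucc (σ : Equiv.Perm (Fin n)) (i : Fin n) :
    snocMin σ i.castSucc = (σ i).succ := by
  simp [snocMin]

@[simp]
theorem snocMin_last (σ : Equiv.Perm (Fin n)) : snocMin σ (Fin.last n) = 0 := by
  simp [snocMin]

theorem permPoint_snocMin (σ : Equiv.Perm (Fin n)) :
    permPoint (snocMin σ) = Fin.snoc (α := fun _ => ℝ) (permPoint σ + 1) 1 := by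
  ext i
  refine Fin.lastCases ?_ (fun i => ?_) i <;> simp [permPoint]

theorem le_snocMin_apply_add {σ : Equiv.Perm (Fin n)} (hσ : ∀ i, n ≤ σ i + i + 2)
    (i : Fin (n + 1)) : n + 1 ≤ snocMin σ i + i + 2 := by
  refine Fin.lastCases ?_ (fun i => ?_) i
  · simp
  · have := hσ i
    simp only [snocMin_castSucc, Fin.val_succ, Fin.val_castSucc]
    lia

theorem le_snocMin_mul_swap_apply_add {σ : Equiv.Perm (Fin (n + 1))}
    (hσ : ∀ i, n + 1 ≤ σ i + i + 2) (i : Fin (n + 2)) :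
    n + 2 ≤ (snocMin σ * Equiv.swap (Fin.last n).castSucc (Fin.last (n + 1))) i + i + 2 := by
  rw [Equiv.Perm.mul_apply]
  refine Fin.lastCases ?_ (Fin.lastCases ?_ fun i => ?_) i
  · rw [Equiv.swap_apply_right, snocMin_castSucc, Fin.val_last]
    lia
  · rw [Equiv.swap_apply_left, snocMin_last, Fin.val_castSucc, Fin.val_last]
    lia
  · rw [Equiv.swap_apply_of_ne_of_ne (by simp [Fin.castSucc_ne_last]) (Fin.castSucc_ne_last _),
      snocMin_castSucc, Fin.val_succ]
    have := hσ i.castSucc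
    simp only [Fin.val_castSucc] at this ⊢
    lia

theorem snoc_add_one_comp_mem_P123132 {τ : Equiv.Perm (Fin (n + 1))}
    (hτ : ∀ σ : Equiv.Perm (Fin n), (∀ i, n ≤ σ i + i + 2) →
      ∀ i, n + 1 ≤ (snocMin σ * τ) i + i + 2)
    {x : Fin n → ℝ} (hx : x ∈ P123132 n) :
    Fin.snoc (α := fun _ => ℝ) (x + 1) 1 ∘ τ ∈ P123132 (n + 1) := by
  rw [P123132_eq_convexHull] at hx ⊢
  refine convexHull_min (t := {x | Fin.snoc (α := fun _ => ℝ) (x + 1) 1 ∘ τ ∈ convexHull ℝ _})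
    ?_ ?_ hx
  · rintro _ ⟨σ, hσ, rfl⟩
    refine subset_convexHull ℝ _ ⟨snocMin σ * τ, hτ σ hσ, ?_⟩
    rw [← permPoint_snocMin]
    rfl
  · intro y hy z hz s t hs ht hst
    have hsnoc : Fin.snoc (α := fun _ => ℝ) (s • y + t • z + 1) 1 =
        s • Fin.snoc (α := fun _ => ℝ) (y + 1) 1 + t • Fin.snoc (α := fun _ => ℝ) (z + 1) 1 := by
      ext i
      refine Fin.lastCases ?_ (fun i => ?_) i
      · simp [hst]
      · simp only [Fin.snoc_castSucc, Pi.add_apply, Pi.smul_apply, Pi.one_apply, smul_eq_mul]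
        linear_combination -hst
    rw [Set.mem_ofPred_eq, hsnoc]
    exact convex_convexHull ℝ _ hy hz hs ht hst

theorem mem_segment_comp_swap {ι 𝕜 : Type*} [DecidableEq ι] [Field 𝕜] [LinearOrder 𝕜]
    [IsStrictOrderedRing 𝕜] {u x : ι → 𝕜} {p q : ι} (hoff : ∀ i, i ≠ p → i ≠ q → x i = u i)
    (hsum : x p + x q = u p + u q) (hp : u q ≤ x p) (hq : u q ≤ x q) :
    x ∈ segment 𝕜 u (u ∘ Equiv.swap p q) := by
  have hmem : x p ∈ segment 𝕜 (u p) (u q) := by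
    rw [segment_symm, segment_eq_Icc (by linarith)]
    exact ⟨hp, by linarith⟩
  obtain ⟨s, t, hs, ht, hst, hxp⟩ := hmem
  refine ⟨s, t, hs, ht, hst, funext fun i => ?_⟩
  simp only [smul_eq_mul] at hxp
  simp only [Pi.add_apply, Pi.smul_apply, Function.comp_apply, smul_eq_mul]
  by_cases hip : i = p
  · rw [hip, Equiv.swap_apply_left, hxp]
  by_cases hiq : i = q
  · rw [hiq, Equiv.swap_apply_right]
    linear_combination (u p + u q) * hst - hxp - hsum
  · rw [Equiv.swap_apply_of_ne_of_ne hip hiq, hoff i hip hiq, ← add_mul, hst, one_mul]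

theorem permLift_mem_segment {y : Fin (k + 1) → ℝ} (hy : y ∈ pitmanStanley (k + 1) 1 1) :
    let u : Fin (k + 2) → ℝ := Fin.snoc (permLift 1 (Fin.init y) + 1) 1
    permLift 1 y ∈ segment ℝ u (u ∘ Equiv.swap (Fin.last k).castSucc (Fin.last (k + 1))) := by
  intro u
  have hu_last : u (Fin.last (k + 1)) = 1 := Fin.snoc_last ..
  have hu_castSucc (i : Fin (k + 1)) : u i.castSucc = permLift 1 (Fin.init y) i + 1 :=
    Fin.snoc_castSucc ..
  have hlast : 0 ≤ y (Fin.last k) := hy.1 _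
  have hsum := sum_le_of_mem_pitmanStanley hy
  refine mem_segment_comp_swap ?_ ?_ ?_ ?_
  · refine Fin.lastCases (fun _ h => (h rfl).elim) (Fin.lastCases (fun h => (h rfl).elim) ?_)
    intro i _ _
    simp only [hu_castSucc, permLift_castSucc, Fin.val_castSucc, Fin.init_def, Nat.cast_succ]
    ring
  · simp only [hu_castSucc, hu_last, permLift_castSucc, permLift_last, Fin.val_last, Fin.init_def,
      Nat.cast_succ, Fin.sum_univ_castSucc]
    ring
  · simp only [hu_last, permLift_castSucc, Fin.val_last, Nat.cast_succ]
    linarith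
  · simp only [hu_last, permLift_last, Nat.cast_succ]
    linarith

theorem permLift_mem_P123132 {y : Fin k → ℝ} (hy : y ∈ pitmanStanley k 1 1) :
    permLift 1 y ∈ P123132 (k + 1) := by
  induction k with
  | zero =>
    have hpoint : permPoint 1 = permLift 1 y :=
      funext <| Fin.lastCases (by rw [permLift_last]; simp [permPoint]) finZeroElim
    rw [P123132_eq_convexHull, ← hpoint]
    exact subset_convexHull ℝ _ ⟨1, by simp, rfl⟩
  | succ k ih =>
    have hx := ih (init_mem_pitmanStanley hy)
    have hstay := snoc_add_one_comp_mem_P123132 (τ := 1)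
      (fun σ hσ => by simpa only [mul_one] using le_snocMin_apply_add hσ) hx
    have hswap := snoc_add_one_comp_mem_P123132 (fun σ => le_snocMin_mul_swap_apply_add) hx
    exact (convex_convexHull ℝ _).segment_subset hstay hswap (permLift_mem_segment hy)

theorem P123132_succ (k : ℕ) : P123132 (k + 1) = permLift 1 '' pitmanStanley k 1 1 := by
  refine Set.Subset.antisymm ?_ (Set.image_subset_iff.2 fun y => permLift_mem_P123132)
  rw [P123132_eq_convexHull]
  refine convexHull_min (Set.image_subset_iff.2 fun σ => ?_) (convex_image_permLift 1 1 1)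
  exact permPoint_mem_image_permLift

theorem natCast_smul_P123132_succ (k m : ℕ) :
    (m : ℝ) • P123132 (k + 1) = permLift (m : ℝ) '' pitmanStanley k m m := by
  rw [P123132_succ, smul_image_permLift, smul_pitmanStanley m.cast_nonneg zero_le_one zero_le_one,
    mul_one]

end Vertices

theorem stmt5 (n : ℕ) (hn : 2 ≤ n) (m : ℕ) :
    Nat.factorial (n - 1) *
        Set.ncard {x : Fin n → ℤ | (fun i => (x i : ℝ)) ∈ (m : ℝ) • P123132 n} =
      (m + 1) * ∏ j ∈ Finset.Icc 2 (n - 1), (n * m + j) := by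
  obtain ⟨k, rfl⟩ := Nat.exists_eq_add_of_le' hn
  have hlattice := setOf_intCast_mem_image_permLift (R := ℝ) (k := k + 1) m m m
  simp only [Int.cast_natCast] at hlattice
  rw [natCast_smul_P123132_succ, hlattice, Set.ncard_image_of_injective _ (permLift_injective _),
    Nat.add_succ_sub_one, factorial_mul_ncard_pitmanStanley, Nat.ascFactorial_eq_prod_range,
    ← Finset.Ico_add_one_right_eq_Icc, Finset.prod_Ico_eq_prod_range]
  congr! 2 with i
  ring
end
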